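/- Let 𝒫 be a configuration of n points in general position in the plane, with n odd. Then there exists an integer i with 0 ≤ i ≤ n such that the number of unordered pairs {P,Q} of distinct points of 𝒫 for which n(P,Q) is odd equals i(n−i); for all remaining pairs, n(P,Q) is even. -/

import Mathlib

open scoped Classical

noncomputable section

/-- The set Pts is in general position: no three distinct points are collinear. -/
def GenPos (Pts : Finset (ℝ × ℝ)) : Prop :=
  ∀ A ∈ Pts, ∀ B ∈ Pts, ∀ C ∈ Pts, A ≠ B → A ≠ C → B ≠ C →
    ¬ Collinear ℝ ({A, B, C} : Set (ℝ × ℝ))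

/-- `sepCount Pts P Q` is the number of unordered pairs `{R, S}` of points of `Pts \ {P, Q}`
such that the line through `R` and `S` strictly separates `P` and `Q`. -/
def sepCount (Pts : Finset (ℝ × ℝ)) (P Q : ℝ × ℝ) : ℕ :=
  ((Finset.powersetCard 2 (Pts \ {P, Q})).filter
    (fun s => (affineSpan ℝ (↑s : Set (ℝ × ℝ))).SOppSide P Q)).card

/-- The vertices of the convex hull of `Pts` (its extreme points). -/
def hullVertices (Pts : Finset (ℝ × ℝ)) : Set (ℝ × ℝ) :=
  Set.extremePoints ℝ (convexHull ℝ (↑Pts : Set (ℝ × ℝ)))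

/-- `Q : ZMod k → ℝ × ℝ` lists the points of `S` in convex position, in cyclic order:
`Q` is an injective enumeration of `S` and, for every `i`, all points of `S` other than
`Q i` and `Q (i+1)` lie strictly on the same side of the line through `Q i` and `Q (i+1)`
(i.e. each consecutive pair spans an edge of the convex hull of `S`). -/
def IsConvexCycle (k : ℕ) (S : Set (ℝ × ℝ)) (Q : ZMod k → ℝ × ℝ) : Prop :=
  Function.Injective Q ∧ Set.range Q = S ∧
    ∀ i : ZMod k, ∀ x ∈ S, ∀ y ∈ S,
      x ∉ ({Q i, Q (i + 1)} : Set (ℝ × ℝ)) → y ∉ ({Q i, Q (i + 1)} : Set (ℝ × ℝ)) →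
        (affineSpan ℝ ({Q i, Q (i + 1)} : Set (ℝ × ℝ))).SSameSide x y

/-- Signed area determinant. -/
def dtm (A B C : ℝ × ℝ) : ℝ := (B.1-A.1)*(C.2-A.2)-(B.2-A.2)*(C.1-A.1)

def chi (A B C : ℝ × ℝ) : ZMod 2 := if 0 < dtm A B C then 1 else 0

def ind (s : Finset (ℝ × ℝ)) (P Q : ℝ × ℝ) : ZMod 2 :=
  if (affineSpan ℝ (↑s : Set (ℝ × ℝ))).SOppSide P Q then 1 else 0

lemma mem_line_iff {A B X : ℝ × ℝ} (h : A ≠ B) :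
    X ∈ affineSpan ℝ ({A, B} : Set (ℝ × ℝ)) ↔ dtm A B X = 0 := by
  rw [mem_affineSpan_pair_iff_exists_lineMap_eq]
  obtain ⟨a, b⟩ := A
  obtain ⟨c, d⟩ := B
  obtain ⟨x, y⟩ := X
  simp only [dtm, AffineMap.lineMap_apply, Prod.mk.injEq, vsub_eq_sub, vadd_eq_add, Prod.mk_sub_mk,
    Prod.smul_mk, Prod.mk_add_mk, smul_eq_mul, ne_eq] at h ⊢
  constructor
  · rintro ⟨r, rfl, rfl⟩
    ring
  · intro h0
    by_cases hac : a = c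
    · have hbd : d - b ≠ 0 := fun hh => h ⟨hac, by linarith⟩
      subst hac
      refine ⟨(y - b) / (d - b), ?_, ?_⟩
      · have : (d - b) * (x - a) = 0 := by linarith
        rcases mul_eq_zero.1 this with h1 | h1
        · exact absurd h1 hbd
        · linarith
      · field_simp
        ring
    · have hca : c - a ≠ 0 := fun hh => hac (by linarith)
      refine ⟨(x - a) / (c - a), ?_, ?_⟩
      · field_simp
        ring
      · field_simp
        linarith

lemma dtm_ne {Pts : Finset (ℝ × ℝ)} (hgen : GenPos Pts) {A B C : ℝ × ℝ} (hA : A ∈ Pts)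
    (hB : B ∈ Pts) (hC : C ∈ Pts) (hAB : A ≠ B) (hAC : A ≠ C) (hBC : B ≠ C) :
    dtm A B C ≠ 0 := by
  intro h
  have h1 := collinear_insert_of_mem_affineSpan_pair ((mem_line_iff hAB).2 h)
  apply hgen C hC A hA B hB hAC.symm hBC.symm hAB h1

lemma dtm_lineMap (A B P Q : ℝ × ℝ) (t : ℝ) :
    dtm A B (AffineMap.lineMap P Q t) = (1 - t) * dtm A B P + t * dtm A B Q := by
  simp only [dtm, AffineMap.lineMap_apply, vsub_eq_sub, vadd_eq_add, Prod.fst_add, Prod.snd_add,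
    Prod.smul_fst, Prod.smul_snd, smul_eq_mul, Prod.fst_sub, Prod.snd_sub]
  ring

lemma sOpp_iff {A B P Q : ℝ × ℝ} (h : A ≠ B) (hP : dtm A B P ≠ 0) (hQ : dtm A B Q ≠ 0) :
    (affineSpan ℝ ({A, B} : Set (ℝ × ℝ))).SOppSide P Q ↔ dtm A B P * dtm A B Q < 0 := by
  unfold AffineSubspace.SOppSide
  rw [AffineSubspace.wOppSide_iff_exists_wbtw, mem_line_iff h, mem_line_iff h]
  simp only [hP, hQ, not_false_eq_true, and_true]
  constructor
  · rintro ⟨p, hp, t, ⟨ht0, ht1⟩, rfl⟩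
    rw [mem_line_iff h, dtm_lineMap] at hp
    by_contra hc
    have hpos : 0 < dtm A B P * dtm A B Q := lt_of_le_of_ne (not_lt.1 hc) (mul_ne_zero hP hQ).symm
    have e1 : (1 - t) * (dtm A B P * dtm A B P) + t * (dtm A B P * dtm A B Q) = 0 := by
      linear_combination dtm A B P * hp
    have hPP : 0 < dtm A B P * dtm A B P := mul_self_pos.2 hP
    have a1 := mul_nonneg (sub_nonneg.2 ht1) hPP.le
    have a2 := mul_nonneg ht0 hpos.le
    have a3 : t * (dtm A B P * dtm A B Q) = 0 := by linarith
    have a4 : (1 - t) * (dtm A B P * dtm A B P) = 0 := by linarith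
    have t0 := (mul_eq_zero.1 a3).resolve_right hpos.ne'
    have t1 := (mul_eq_zero.1 a4).resolve_right hPP.ne'
    linarith
  · intro hneg
    have key : ∃ t : ℝ, 0 ≤ t ∧ t ≤ 1 ∧ (1 - t) * dtm A B P + t * dtm A B Q = 0 := by
      generalize dtm A B P = x at *
      generalize dtm A B Q = y at *
      rcases mul_neg_iff.1 hneg with ⟨hx, hy⟩ | ⟨hx, hy⟩
      · have : 0 < x - y := by linarith
        refine ⟨x / (x - y), by positivity, by rw [div_le_one this]; linarith, ?_⟩
        field_simp
        ring
      · have : 0 < y - x := by linarith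
        refine ⟨(-x) / (y - x), div_nonneg (by linarith) this.le,
          by rw [div_le_one this]; linarith, ?_⟩
        field_simp
        ring
    obtain ⟨t, h0, h1, ht⟩ := key
    refine ⟨AffineMap.lineMap P Q t, ?_, t, ⟨h0, h1⟩, rfl⟩
    rw [mem_line_iff h, dtm_lineMap, ht]

lemma ind_eq {A B P Q : ℝ × ℝ} (h : A ≠ B) (hP : dtm A B P ≠ 0) (hQ : dtm A B Q ≠ 0) :
    ind {A, B} P Q = chi A B P + chi A B Q := by
  unfold ind chi
  rw [Finset.coe_pair, sOpp_iff h hP hQ, mul_neg_iff]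
  have e : (1 : ZMod 2) + 1 = 0 := by decide
  rcases lt_or_gt_of_ne hP with h1 | h1 <;> rcases lt_or_gt_of_ne hQ with h2 | h2 <;>
    simp [h1, h2, not_lt.2 h1.le, not_lt.2 h2.le, e]

lemma chi_swap {A B C : ℝ × ℝ} (h : dtm A B C ≠ 0) : chi A B C + chi C B A = 1 := by
  have e : dtm C B A = - dtm A B C := by unfold dtm; ring
  unfold chi
  rw [e]
  rcases lt_or_gt_of_ne h with h1 | h1 <;> simp [h1, not_lt.2 h1.le]

lemma ind_left {s : Finset (ℝ × ℝ)} {P Q : ℝ × ℝ} (h : P ∈ s) : ind s P Q = 0 := by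
  unfold ind
  rw [if_neg]
  intro hh
  exact hh.2.1 (subset_affineSpan ℝ _ (by simpa using h))

lemma ind_comm (s : Finset (ℝ × ℝ)) (P Q : ℝ × ℝ) : ind s P Q = ind s Q P := by
  unfold ind
  rw [AffineSubspace.sOppSide_comm]

lemma ind_right {s : Finset (ℝ × ℝ)} {P Q : ℝ × ℝ} (h : Q ∈ s) : ind s P Q = 0 := by
  rw [ind_comm, ind_left h]

lemma ind_self (s : Finset (ℝ × ℝ)) (P : ℝ × ℝ) : ind s P P = 0 := by
  unfold ind
  rw [if_neg]
  exact AffineSubspace.not_sOppSide_self _ _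

lemma sepCount_eq (Pts : Finset (ℝ × ℝ)) (P Q : ℝ × ℝ) :
    sepCount Pts P Q = ((Finset.powersetCard 2 (Pts \ {P, Q})).filter
    (fun s : Finset (ℝ × ℝ) => (affineSpan ℝ (↑s : Set (ℝ × ℝ))).SOppSide P Q)).card := by
  unfold sepCount
  symm
  refine Finset.card_bij (fun s _ => (↑s : Set (ℝ × ℝ))) ?_ ?_ ?_
  · intro s hs
    rw [Finset.mem_filter] at hs ⊢
    refine ⟨?_, hs.2⟩
    simp only [Finset.bind_def, Finset.pure_def, Finset.mem_sup, Finset.mem_singleton]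
    exact ⟨s, hs.1, rfl⟩
  · intro s _ t _ h
    exact Finset.coe_injective h
  · intro x hx
    rw [Finset.mem_filter] at hx
    obtain ⟨h1, h2⟩ := hx
    simp only [Finset.bind_def, Finset.pure_def, Finset.mem_sup, Finset.mem_singleton] at h1
    obtain ⟨s, hs, rfl⟩ := h1
    exact ⟨s, Finset.mem_filter.2 ⟨hs, h2⟩, rfl⟩

lemma sepCount_cast (Pts : Finset (ℝ × ℝ)) (P Q : ℝ × ℝ) :
    (sepCount Pts P Q : ZMod 2) = ∑ s ∈ Finset.powersetCard 2 Pts, ind s P Q := by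
  rw [sepCount_eq, Finset.card_filter]
  push_cast
  have : ∀ s : Finset (ℝ × ℝ), (if (affineSpan ℝ (↑s : Set (ℝ × ℝ))).SOppSide P Q then (1 : ZMod 2) else 0)
    = ind s P Q := fun s => rfl
  refine (Finset.sum_congr rfl (fun s _ => this s)).trans ?_
  apply Finset.sum_subset (Finset.powersetCard_mono Finset.sdiff_subset)
  intro s hs hs'
  by_cases h1 : P ∈ s
  · exact ind_left h1
  by_cases h2 : Q ∈ s
  · exact ind_right h2
  exfalso
  apply hs'
  rw [Finset.mem_powersetCard] at hs ⊢
  refine ⟨fun x hx => ?_, hs.2⟩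
  simp only [Finset.mem_sdiff, Finset.mem_insert, Finset.mem_singleton]
  refine ⟨hs.1 hx, ?_⟩
  rintro (rfl | rfl) <;> contradiction

lemma triple {Pts : Finset (ℝ × ℝ)} (hgen : GenPos Pts) (hn : Odd Pts.card) {P Q R : ℝ × ℝ}
    (hP : P ∈ Pts) (hQ : Q ∈ Pts) (hR : R ∈ Pts) (hPQ : P ≠ Q) (hPR : P ≠ R) (hQR : Q ≠ R) :
    (sepCount Pts P Q : ZMod 2) + sepCount Pts Q R + sepCount Pts P R = 0 := by
  rw [sepCount_cast, sepCount_cast, sepCount_cast, ← Finset.sum_add_distrib,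
    ← Finset.sum_add_distrib]
  set T : Finset (ℝ × ℝ) := {P, Q, R} with hT
  have hTs : T ⊆ Pts := by
    intro x hx
    simp only [hT, Finset.mem_insert, Finset.mem_singleton] at hx
    rcases hx with rfl | rfl | rfl <;> assumption
  have hTc : T.card = 3 := Finset.card_eq_three.2 ⟨P, Q, R, hPQ, hPR, hQR, rfl⟩
  set I : Finset (Finset (ℝ × ℝ)) :=
    (T ×ˢ (Pts \ T)).image (fun x => ({x.1, x.2} : Finset (ℝ × ℝ))) with hI
  have hIs : I ⊆ Finset.powersetCard 2 Pts := by
    intro s hs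
    simp only [hI, Finset.mem_image, Finset.mem_product, Finset.mem_sdiff] at hs
    obtain ⟨⟨a, b⟩, ⟨ha, hb, hb'⟩, rfl⟩ := hs
    dsimp only at ha hb hb' ⊢
    rw [Finset.mem_powersetCard]
    refine ⟨?_, Finset.card_pair (by rintro rfl; exact hb' ha)⟩
    intro x hx
    simp only [Finset.mem_insert, Finset.mem_singleton] at hx
    rcases hx with rfl | rfl
    · exact hTs ha
    · exact hb
  rw [← Finset.sum_subset hIs]
  · rw [hI, Finset.sum_image, Finset.sum_product_right]
    · have : ∀ S ∈ Pts \ T, ∑ A ∈ T, (ind {A, S} P Q + ind {A, S} Q R + ind {A, S} P R) = 1 := by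
        intro S hS
        simp only [hT, Finset.mem_sdiff, Finset.mem_insert, Finset.mem_singleton, not_or] at hS
        obtain ⟨hS, hSP, hSQ, hSR⟩ := hS
        rw [hT, Finset.sum_insert (by simp [hPQ, hPR]), Finset.sum_insert (by simp [hQR]),
          Finset.sum_singleton]
        rw [ind_left (s := {P, S}) (P := P) (Q := Q) (by simp),
          ind_left (s := {P, S}) (P := P) (Q := R) (by simp),
          ind_right (s := {Q, S}) (P := P) (Q := Q) (by simp),
          ind_left (s := {Q, S}) (P := Q) (Q := R) (by simp),
          ind_right (s := {R, S}) (P := P) (Q := R) (by simp),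
          ind_right (s := {R, S}) (P := Q) (Q := R) (by simp)]
        have d1 : dtm P S Q ≠ 0 := dtm_ne hgen hP hS hQ (Ne.symm hSP) hPQ hSQ
        have d2 : dtm P S R ≠ 0 := dtm_ne hgen hP hS hR (Ne.symm hSP) hPR hSR
        have d3 : dtm Q S P ≠ 0 := dtm_ne hgen hQ hS hP (Ne.symm hSQ) hPQ.symm hSP
        have d4 : dtm Q S R ≠ 0 := dtm_ne hgen hQ hS hR (Ne.symm hSQ) hQR hSR
        have d5 : dtm R S P ≠ 0 := dtm_ne hgen hR hS hP (Ne.symm hSR) hPR.symm hSP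
        have d6 : dtm R S Q ≠ 0 := dtm_ne hgen hR hS hQ (Ne.symm hSR) hQR.symm hSQ
        rw [ind_eq (Ne.symm hSP) d1 d2, ind_eq (Ne.symm hSQ) d3 d4, ind_eq (Ne.symm hSR) d5 d6]
        have e : (1 : ZMod 2) + 1 = 0 := by decide
        linear_combination chi_swap d1 + chi_swap d2 + chi_swap d4 + e
      rw [Finset.sum_congr rfl this, Finset.sum_const, nsmul_eq_mul, mul_one,
        Finset.card_sdiff_of_subset hTs, hTc, ZMod.natCast_eq_zero_iff_even]
      have : T.card ≤ Pts.card := Finset.card_le_card hTs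
      obtain ⟨k, hk⟩ := hn
      exact ⟨k - 1, by omega⟩
    · rintro ⟨a, b⟩ hab ⟨c, d⟩ hcd he
      simp only [Finset.coe_product, Set.mem_prod, Finset.mem_coe, Finset.mem_sdiff] at hab hcd he
      obtain ⟨ha, hb, hb'⟩ := hab
      obtain ⟨hc, hd, hd'⟩ := hcd
      have h1 : a ∈ ({c, d} : Finset (ℝ × ℝ)) := by rw [← he]; simp
      have h2 : b ∈ ({c, d} : Finset (ℝ × ℝ)) := by rw [← he]; simp
      simp only [Finset.mem_insert, Finset.mem_singleton] at h1 h2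
      have h3 : a = c := h1.resolve_right (by rintro rfl; exact hd' ha)
      have h4 : b = d := h2.resolve_left (by rintro rfl; exact hb' hc)
      rw [h3, h4]
  · intro s hs hsI
    have e : (1 : ZMod 2) + 1 = 0 := by decide
    rw [Finset.mem_powersetCard, Finset.card_eq_two] at hs
    obtain ⟨hs, a, b, hab, rfl⟩ := hs
    have haP : a ∈ Pts := hs (by simp)
    have hbP : b ∈ Pts := hs (by simp)
    have hiff : a ∈ T ↔ b ∈ T := by
      constructor
      · intro ha
        by_contra hb
        exact hsI (Finset.mem_image.2 ⟨(a, b), by simp [ha, hb, hbP], rfl⟩)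
      · intro hb
        by_contra ha
        exact hsI (Finset.mem_image.2 ⟨(b, a), by simp [ha, hb, haP], Finset.pair_comm _ _⟩)
    by_cases ha : a ∈ T
    · have hb := hiff.1 ha
      simp only [hT, Finset.mem_insert, Finset.mem_singleton] at ha hb
      rcases ha with rfl | rfl | rfl <;> rcases hb with rfl | rfl | rfl <;>
        first
        | exact absurd rfl hab
        | simp [ind_left, ind_right]
    · have hb : b ∉ T := fun h => ha (hiff.2 h)
      simp only [hT, Finset.mem_insert, Finset.mem_singleton, not_or] at ha hb
      have d1 : dtm a b P ≠ 0 := dtm_ne hgen haP hbP hP hab ha.1 hb.1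
      have d2 : dtm a b Q ≠ 0 := dtm_ne hgen haP hbP hQ hab ha.2.1 hb.2.1
      have d3 : dtm a b R ≠ 0 := dtm_ne hgen haP hbP hR hab ha.2.2 hb.2.2
      rw [ind_eq hab d1 d2, ind_eq hab d2 d3, ind_eq hab d1 d3]
      linear_combination (chi a b P + chi a b Q + chi a b R) * e

lemma sepCount_comm (Pts : Finset (ℝ × ℝ)) (P Q : ℝ × ℝ) :
    sepCount Pts P Q = sepCount Pts Q P := by
  unfold sepCount
  rw [Finset.pair_comm]
  simp only [AffineSubspace.sOppSide_comm (x := P)]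

lemma colouring {Pts : Finset (ℝ × ℝ)} (hgen : GenPos Pts) (hn : Odd Pts.card) :
    ∃ A ⊆ Pts, ∀ X ∈ Pts, ∀ Y ∈ Pts, X ≠ Y →
      (Odd (sepCount Pts X Y) ↔ ¬ (X ∈ A ↔ Y ∈ A)) := by
  have hne : Pts.Nonempty := by
    rw [← Finset.card_pos]
    exact hn.pos
  obtain ⟨O, hO⟩ := hne
  have h0 : (sepCount Pts O O : ZMod 2) = 0 := by
    rw [sepCount_cast]
    simp [ind_self]
  have e : (1 : ZMod 2) + 1 = 0 := by decide
  have key : ∀ X ∈ Pts, ∀ Y ∈ Pts, X ≠ Y →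
      (sepCount Pts X Y : ZMod 2) = sepCount Pts O X + sepCount Pts O Y := by
    intro X hX Y hY hXY
    by_cases h1 : X = O
    · subst h1
      rw [h0, zero_add]
    by_cases h2 : Y = O
    · subst h2
      rw [h0, add_zero, sepCount_comm]
    have := triple hgen hn hO hX hY (Ne.symm h1) (Ne.symm h2) hXY
    linear_combination this - (sepCount Pts O X + sepCount Pts O Y : ZMod 2) * e
  refine ⟨Pts.filter (fun X => Odd (sepCount Pts O X)), Finset.filter_subset _ _, ?_⟩
  intro X hX Y hY hXY
  simp only [Finset.mem_filter, hX, hY, true_and]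
  have k := key X hX Y hY hXY
  rw [← Nat.cast_add, ZMod.natCast_eq_natCast_iff'] at k
  simp only [Nat.odd_iff]
  omega

/-- If `n` is odd, then for some `0 ≤ i ≤ n` exactly `i * (n - i)` of the unordered pairs
of distinct points of the configuration have an odd number of separating lines, and the
remaining pairs have an even number of separating lines. -/
theorem odd_card_odd_sepCount (n : ℕ) (Pts : Finset (ℝ × ℝ))
    (hgen : GenPos Pts) (hcard : Pts.card = n) (hn : Odd n) :
    ∃ i ≤ n,
      ((Finset.powersetCard 2 Pts).filter
        (fun s => ∃ P Q : ℝ × ℝ, P ≠ Q ∧ s = {P, Q} ∧ Odd (sepCount Pts P Q))).card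
        = i * (n - i) ∧
      ((Finset.powersetCard 2 Pts).filter
        (fun s => ∃ P Q : ℝ × ℝ, P ≠ Q ∧ s = {P, Q} ∧ Even (sepCount Pts P Q))).card
        = n.choose 2 - i * (n - i) := by
  subst hcard
  obtain ⟨A, hA, hodd⟩ := colouring hgen hn
  have hE : (Finset.powersetCard 2 Pts).filter
        (fun s => ∃ P Q : ℝ × ℝ, P ≠ Q ∧ s = {P, Q} ∧ Odd (sepCount Pts P Q)) =
      (A ×ˢ (Pts \ A)).image (fun x => ({x.1, x.2} : Finset (ℝ × ℝ))) := by
    ext s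
    simp only [Finset.mem_filter, Finset.mem_powersetCard, Finset.mem_image, Finset.mem_product,
      Finset.mem_sdiff]
    constructor
    · rintro ⟨⟨hs, -⟩, P, Q, hPQ, rfl, ho⟩
      have hP : P ∈ Pts := hs (by simp)
      have hQ : Q ∈ Pts := hs (by simp)
      have := (hodd P hP Q hQ hPQ).1 ho
      by_cases hPA : P ∈ A
      · exact ⟨(P, Q), ⟨hPA, hQ, by tauto⟩, rfl⟩
      · exact ⟨(Q, P), ⟨by tauto, hP, hPA⟩, Finset.pair_comm _ _⟩
    · rintro ⟨⟨P, Q⟩, ⟨hP, hQ, hQA⟩, rfl⟩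
      dsimp only at hP hQ hQA ⊢
      have hPQ : P ≠ Q := by rintro rfl; exact hQA hP
      refine ⟨⟨?_, Finset.card_pair hPQ⟩, P, Q, hPQ, rfl, ?_⟩
      · intro x hx
        simp only [Finset.mem_insert, Finset.mem_singleton] at hx
        rcases hx with rfl | rfl
        · exact hA hP
        · exact hQ
      · rw [hodd P (hA hP) Q hQ hPQ]
        tauto
  have hcardE : ((Finset.powersetCard 2 Pts).filter
        (fun s => ∃ P Q : ℝ × ℝ, P ≠ Q ∧ s = {P, Q} ∧ Odd (sepCount Pts P Q))).card =
      A.card * (Pts.card - A.card) := by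
    rw [hE, Finset.card_image_of_injOn, Finset.card_product, Finset.card_sdiff_of_subset hA]
    rintro ⟨a, b⟩ hab ⟨c, d⟩ hcd he
    simp only [Finset.coe_product, Set.mem_prod, Finset.mem_coe, Finset.mem_sdiff] at hab hcd he
    obtain ⟨ha, hb, hb'⟩ := hab
    obtain ⟨hc, hd, hd'⟩ := hcd
    have h1 : a ∈ ({c, d} : Finset (ℝ × ℝ)) := by rw [← he]; simp
    have h2 : b ∈ ({c, d} : Finset (ℝ × ℝ)) := by rw [← he]; simp
    simp only [Finset.mem_insert, Finset.mem_singleton] at h1 h2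
    have h3 : a = c := h1.resolve_right (by rintro rfl; exact hd' ha)
    have h4 : b = d := h2.resolve_left (by rintro rfl; exact hb' hc)
    rw [h3, h4]
  refine ⟨A.card, Finset.card_le_card hA, hcardE, ?_⟩
  have hsum := Finset.card_filter_add_card_filter_not (s := Finset.powersetCard 2 Pts)
    (fun s => ∃ P Q : ℝ × ℝ, P ≠ Q ∧ s = {P, Q} ∧ Odd (sepCount Pts P Q))
  rw [hcardE, Finset.card_powersetCard] at hsum
  rw [← hsum, Nat.add_sub_cancel_left]
  congr 1
  apply Finset.filter_congr
  intro s hs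
  rw [Finset.mem_powersetCard] at hs
  constructor
  · rintro ⟨P, Q, hPQ, rfl, he⟩ ⟨P', Q', hPQ', heq, ho⟩
    have h1 : P' ∈ ({P, Q} : Finset (ℝ × ℝ)) := by rw [heq]; simp
    have h2 : Q' ∈ ({P, Q} : Finset (ℝ × ℝ)) := by rw [heq]; simp
    simp only [Finset.mem_insert, Finset.mem_singleton] at h1 h2
    rw [← Nat.not_odd_iff_even] at he
    rcases h1 with rfl | rfl <;> rcases h2 with rfl | rfl
    · exact hPQ' rfl
    · exact he ho
    · rw [sepCount_comm] at ho
      exact he ho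
    · exact hPQ' rfl
  · intro hno
    obtain ⟨P, Q, hPQ, rfl⟩ := Finset.card_eq_two.1 hs.2
    refine ⟨P, Q, hPQ, rfl, ?_⟩
    rw [← Nat.not_odd_iff_even]
    exact fun ho => hno ⟨P, Q, hPQ, rfl, ho⟩

end
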